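/- Let A be a real m×n matrix, b ∈ ℝ^m, f : ℝ^n → ℝ convex, and φ(λ) = ⟨λ, b⟩ + sup_{x ∈ ℝ^n} (−f(x) − ⟨Aᵀλ, x⟩). Let t ≥ 1, let α_1, …, α_t > 0 with ᾱ = Σ_{j=1}^t α_j, let μ_1, …, μ_t ∈ ℝ^m and x_1, …, x_t ∈ ℝ^n be such that for each j the point x_j attains the supremum defining φ(μ_j), so that φ(μ_j) = ⟨μ_j, b − A x_j⟩ − f(x_j). Suppose λ̄ ∈ ℝ^m satisfies ᾱ φ(λ̄) ≤ Σ_{j=1}^t α_j (φ(μ_j) + ⟨b − A x_j, z − μ_j⟩) + ‖z‖_∞² for every z ∈ ℝ^m, set x̄ = ᾱ^{-1} Σ_{j=1}^t α_j x_j, and suppose there exists λ* ∈ ℝ^m with ‖λ*‖_∞ ≤ R̂ (R̂ > 0), φ(λ*) finite, and φ(λ̄) ≥ φ(λ*). Then ‖A x̄ − b‖_1 ≤ 4 R̂ / ᾱ. -/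

import Mathlib

open Finset

/-- ℓ1-norm of a vector. -/
noncomputable def l1Norm {k : ℕ} (x : Fin k → ℝ) : ℝ := ∑ i, |x i|

/-- ℓ∞-norm of a vector. -/
noncomputable def linfNorm {k : ℕ} (x : Fin k → ℝ) : ℝ := ⨆ i, |x i|

/-!
Each linearization of the dual function at `μ j` is the affine function
`z ↦ ⟨b - A x j, z⟩ - f (x j)`, which is concave in `x j`, so by Jensen's inequality the model bound
gives `ᾱ φ(λ̄) ≤ ᾱ (⟨b - A x̄, z⟩ - f x̄) + ‖z‖²` for every `z`. Weak duality gives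
`φ(λ̄) ≥ φ(λ*) ≥ ⟨b - A x̄, λ*⟩ - f x̄`. Hence `f x̄` cancels and the functional `g = ᾱ (b - A x̄)`
satisfies `g λ* ≤ g z + ‖z‖²` for every `z`. The infimum of the right-hand side is `-‖g‖² / 4`,
with the dual norm, and the left-hand side is at least `-‖g‖ ‖λ*‖`; hence `‖g‖ ≤ 4 ‖λ*‖`. The norm
dual to `ℓ∞` is `ℓ1`.
-/

section SquaredNorm

variable {Λ : Type*} [SeminormedAddCommGroup Λ] [NormedSpace ℝ Λ]

theorem sq_norm_le_neg_four_mul_of_forall_le_add_sq_norm {g : StrongDual ℝ Λ} {a : ℝ}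
    (h : ∀ z, a ≤ g z + ‖z‖ ^ 2) : ‖g‖ ^ 2 ≤ -4 * a := by
  have ha : 0 ≤ -4 * a := by
    have h0 := h 0
    rw [map_zero, norm_zero] at h0
    linarith
  have hdiscrim (z : Λ) : g z ^ 2 ≤ -4 * a * ‖z‖ ^ 2 := by
    have hle := discrim_le_zero (a := ‖z‖ ^ 2) (b := g z) (c := -a) fun r => by
      have hr := h (r • z)
      rw [map_smul, smul_eq_mul, norm_smul, mul_pow, Real.norm_eq_abs, sq_abs] at hr
      linarith
    rw [discrim] at hle
    linarith
  refine (Real.le_sqrt (norm_nonneg g) ha).mp ?_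
  refine g.opNorm_le_bound (Real.sqrt_nonneg _) fun z => ?_
  rw [← Real.sqrt_sq (norm_nonneg z), ← Real.sqrt_mul ha]
  exact Real.abs_le_sqrt (hdiscrim z)

theorem norm_le_four_mul_norm_of_forall_apply_le_add_sq_norm {g : StrongDual ℝ Λ} {w : Λ}
    (h : ∀ z, g w ≤ g z + ‖z‖ ^ 2) : ‖g‖ ≤ 4 * ‖w‖ := by
  have hsq := sq_norm_le_neg_four_mul_of_forall_le_add_sq_norm h
  have hw : -g w ≤ ‖g‖ * ‖w‖ := (neg_le_abs _).trans (g.le_opNorm w)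
  rcases (norm_nonneg g).eq_or_lt with hg | hg
  · rw [← hg]
    positivity
  · refine le_of_mul_le_mul_left ?_ hg
    linarith

end SquaredNorm

section DualFunction

variable {E Λ ι : Type*} [AddCommGroup E] [Module ℝ E] [SeminormedAddCommGroup Λ] [NormedSpace ℝ Λ]
  {s : Set E} {f : E → ℝ} {J : Finset ι} {α : ι → ℝ} {x : ι → E}

theorem concaveOn_sub_apply_sub (hf : ConvexOn ℝ s f) (A : E →ₗ[ℝ] StrongDual ℝ Λ)
    (b : StrongDual ℝ Λ) (z : Λ) : ConcaveOn ℝ s fun y => (b - A y) z - f y := by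
  have hlinear : ConcaveOn ℝ s fun y => -A y z :=
    (-((ContinuousLinearMap.apply ℝ ℝ z).toLinearMap ∘ₗ A)).concaveOn hf.1
  refine ((hlinear.add_const (b z)).sub hf).congr fun y _ => ?_
  simp only [Pi.sub_apply, Pi.add_apply, sub_apply]
  ring

theorem sum_mul_linearization_le (hf : ConvexOn ℝ s f) (A : E →ₗ[ℝ] StrongDual ℝ Λ)
    (b : StrongDual ℝ Λ) {φ : Λ → ℝ} {μ : ι → Λ} (hα : ∀ j ∈ J, 0 ≤ α j) (hα_sum : 0 < ∑ j ∈ J, α j)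
    (hx : ∀ j ∈ J, x j ∈ s) (hatt : ∀ j ∈ J, φ (μ j) = (b - A (x j)) (μ j) - f (x j)) (z : Λ) :
    ∑ j ∈ J, α j * (φ (μ j) + (b - A (x j)) (z - μ j)) ≤
      (∑ j ∈ J, α j) * ((b - A (J.centerMass α x)) z - f (J.centerMass α x)) := by
  have hlin : ∑ j ∈ J, α j * (φ (μ j) + (b - A (x j)) (z - μ j)) =
      ∑ j ∈ J, α j * ((b - A (x j)) z - f (x j)) :=
    sum_congr rfl fun j hj => by rw [hatt j hj, map_sub]; ring
  have hJensen := (concaveOn_sub_apply_sub hf A b z).le_map_centerMass hα hα_sum hx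
  rw [hlin]
  rwa [centerMass, smul_eq_mul, inv_mul_le_iff₀ hα_sum] at hJensen

theorem stmt14_general (hf : ConvexOn ℝ s f) (A : E →ₗ[ℝ] StrongDual ℝ Λ) (b : StrongDual ℝ Λ)
    {φ : Λ → ℝ} (hφ : ∀ lam, IsLUB ((fun y => -f y - A y lam) '' s) (φ lam - b lam))
    (hα : ∀ j ∈ J, 0 ≤ α j) (hα_sum : 0 < ∑ j ∈ J, α j) {μ : ι → Λ} (hx : ∀ j ∈ J, x j ∈ s)
    (hatt : ∀ j ∈ J, φ (μ j) = (b - A (x j)) (μ j) - f (x j)) {lambar : Λ}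
    (hlambar : ∀ z, (∑ j ∈ J, α j) * φ lambar ≤
      ∑ j ∈ J, α j * (φ (μ j) + (b - A (x j)) (z - μ j)) + ‖z‖ ^ 2)
    {lamstar : Λ} (hge : φ lamstar ≤ φ lambar) :
    ‖A (J.centerMass α x) - b‖ ≤ 4 * ‖lamstar‖ / ∑ j ∈ J, α j := by
  set xbar := J.centerMass α x
  set abar := ∑ j ∈ J, α j
  have hweak : (b - A xbar) lamstar - f xbar ≤ φ lamstar := by
    have hupper := (hφ lamstar).1 (Set.mem_image_of_mem _ (hf.1.centerMass_mem hα hα_sum hx))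
    rw [sub_apply]
    linarith
  have hgap (z : Λ) : (abar • (b - A xbar)) lamstar ≤ (abar • (b - A xbar)) z + ‖z‖ ^ 2 := by
    have hmodel := sum_mul_linearization_le hf A b hα hα_sum hx hatt z
    have hval := mul_le_mul_of_nonneg_left (hweak.trans hge) hα_sum.le
    simp only [smul_apply, smul_eq_mul]
    linarith [hlambar z]
  have hnorm := norm_le_four_mul_norm_of_forall_apply_le_add_sq_norm hgap
  rw [norm_smul, Real.norm_of_nonneg hα_sum.le] at hnorm
  rwa [norm_sub_rev, le_div_iff₀' hα_sum]

end DualFunction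

section Coordinates

open scoped Matrix

/-- The pairing of `ℓ1` with `ℓ∞`: the functional `w ↦ v ⬝ᵥ w` on `ι → ℝ` with its sup norm, as a
linear function of `v`. -/
noncomputable def dotProductDual (ι : Type*) [Fintype ι] : (ι → ℝ) →ₗ[ℝ] StrongDual ℝ (ι → ℝ) :=
  LinearMap.toContinuousLinearMap.toLinearMap ∘ₗ dotProductBilin ℝ ℝ

variable {ι κ : Type*} [Fintype ι]

theorem univ_centerMass_eq_sum_mul_div (α : ι → ℝ) (x : ι → κ → ℝ) :
    univ.centerMass α x = fun k => (∑ j, α j * x j k) / ∑ j, α j := by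
  funext k
  simp [centerMass, div_eq_inv_mul]

theorem dotProductDual_apply (v w : ι → ℝ) : dotProductDual ι v w = v ⬝ᵥ w := rfl

theorem norm_dotProductDual (v : ι → ℝ) : ‖dotProductDual ι v‖ = ∑ i, |v i| := by
  apply le_antisymm
  · refine ContinuousLinearMap.opNorm_le_bound _ (by positivity) fun w => ?_
    rw [dotProductDual_apply, sum_mul]
    refine norm_sum_le_of_le _ fun i _ => ?_
    rw [norm_mul]
    exact mul_le_mul_of_nonneg_left (norm_le_pi_norm w i) (abs_nonneg _)
  · have hsign : ‖fun i => (SignType.sign (v i) : ℝ)‖ ≤ 1 := by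
      refine (pi_norm_le_iff_of_nonneg zero_le_one).mpr fun i => ?_
      cases SignType.sign (v i) <;> simp
    calc ∑ i, |v i| = dotProductDual ι v fun i => (SignType.sign (v i) : ℝ) :=
          sum_congr rfl fun i _ => (self_mul_sign (v i)).symm
      _ ≤ ‖dotProductDual ι v‖ :=
          (le_abs_self _).trans ((dotProductDual ι v).unit_le_opNorm _ hsign)

theorem linfNorm_eq_norm {k : ℕ} (w : Fin k → ℝ) : linfNorm w = ‖w‖ :=
  (PiLp.norm_eq_ciSup (WithLp.toLp ⊤ w)).symm.trans (PiLp.norm_toLp w)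

variable [Fintype κ]

/-- The linear map `y ↦ M y` with values in `ℓ1`, viewed as the dual of `ℓ∞`. -/
noncomputable def mulVecDual (M : Matrix ι κ ℝ) : (κ → ℝ) →ₗ[ℝ] StrongDual ℝ (ι → ℝ) :=
  dotProductDual ι ∘ₗ M.mulVecLin

theorem mulVecDual_apply_apply (M : Matrix ι κ ℝ) (y : κ → ℝ) (w : ι → ℝ) :
    mulVecDual M y w = Mᵀ *ᵥ w ⬝ᵥ y := by
  rw [Matrix.mulVec_transpose, ← Matrix.dotProduct_mulVec, dotProduct_comm]
  rfl

theorem dotProductDual_sub_mulVecDual_apply (M : Matrix ι κ ℝ) (b w : ι → ℝ) (y : κ → ℝ) :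
    (dotProductDual ι b - mulVecDual M y) w = (b - M *ᵥ y) ⬝ᵥ w :=
  (sub_dotProduct _ _ _).symm

theorem norm_mulVecDual_sub_dotProductDual (M : Matrix ι κ ℝ) (b : ι → ℝ) (y : κ → ℝ) :
    ‖mulVecDual M y - dotProductDual ι b‖ = ∑ i, |(M *ᵥ y) i - b i| := by
  rw [mulVecDual, LinearMap.comp_apply, ← map_sub, norm_dotProductDual]
  rfl

end Coordinates

theorem stmt14 (m n : ℕ) (A : Fin m → Fin n → ℝ) (b : Fin m → ℝ)
    (f : (Fin n → ℝ) → ℝ) (hf : ConvexOn ℝ Set.univ f)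
    (φ : (Fin m → ℝ) → ℝ)
    (hφ : ∀ lam : Fin m → ℝ,
      IsLUB (Set.range fun y : Fin n → ℝ =>
        -f y - ∑ j, (∑ i, A i j * lam i) * y j) (φ lam - ∑ i, lam i * b i))
    (t : ℕ) (ht : 1 ≤ t)
    (α : Fin t → ℝ) (hα : ∀ j, 0 < α j)
    (abar : ℝ) (habar : abar = ∑ j, α j)
    (μ : Fin t → Fin m → ℝ) (x : Fin t → Fin n → ℝ)
    (hatt : ∀ j : Fin t,
      φ (μ j) = (∑ i, μ j i * (b i - ∑ k, A i k * x j k)) - f (x j))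
    (lambar : Fin m → ℝ)
    (hlambar : ∀ z : Fin m → ℝ,
      abar * φ lambar ≤
        (∑ j, α j * (φ (μ j) + ∑ i, (b i - ∑ k, A i k * x j k) * (z i - μ j i))) +
          (linfNorm z) ^ 2)
    (xbar : Fin n → ℝ) (hxbar : xbar = fun k => (∑ j, α j * x j k) / abar)
    (Rhat : ℝ) (hRhat : 0 < Rhat)
    (lamstar : Fin m → ℝ) (hls : linfNorm lamstar ≤ Rhat)
    (hge : φ lamstar ≤ φ lambar) :
    l1Norm (fun i => (∑ k, A i k * xbar k) - b i) ≤ 4 * Rhat / abar := by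
  subst habar hxbar
  have hα_sum : 0 < ∑ j, α j := sum_pos (fun j _ => hα j) ⟨⟨0, ht⟩, mem_univ _⟩
  have hbound := stmt14_general (s := Set.univ) (φ := φ) (μ := μ) hf (mulVecDual (Matrix.of A))
    (dotProductDual (Fin m) b)
    (fun lam => by
      simp only [Set.image_univ, mulVecDual_apply_apply, dotProductDual_apply, dotProduct_comm b]
      exact hφ lam)
    (fun j _ => (hα j).le) hα_sum (fun _ _ => Set.mem_univ _)
    (fun j _ => by
      rw [dotProductDual_sub_mulVecDual_apply, dotProduct_comm]
      exact hatt j)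
    (fun z => by
      simp only [dotProductDual_sub_mulVecDual_apply, ← linfNorm_eq_norm]
      exact hlambar z)
    hge
  rw [univ_centerMass_eq_sum_mul_div, norm_mulVecDual_sub_dotProductDual, ← linfNorm_eq_norm]
    at hbound
  exact hbound.trans (by gcongr)
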